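/- For every real number x > 0 that is not an integer, the function ε₁ is differentiable at x, the function φ₂ is differentiable at x, and ε₁'(x) = (1 − φ₂'(x))². -/

import Mathlib

/-- `φ₂(x) = x - 1 - ({x}² - {x})/x`. -/
noncomputable def phi2 (x : ℝ) : ℝ := x - 1 - (Int.fract x ^ 2 - Int.fract x) / x

/-- `ε₁(x) = 1/3 - 1/(3x) + (4/3)({x}³ - (3/2){x}² + (1/2){x})/x²
             - (1/3)({x}⁴ - 2{x}³ + {x}²)/x³`. -/
noncomputable def eps1 (x : ℝ) : ℝ :=
  1 / 3 - 1 / (3 * x)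
    + (4 / 3) * (Int.fract x ^ 3 - (3 / 2) * Int.fract x ^ 2 + (1 / 2) * Int.fract x) / x ^ 2
    - (1 / 3) * (Int.fract x ^ 4 - 2 * Int.fract x ^ 3 + Int.fract x ^ 2) / x ^ 3

/-- For every real `x > 0` which is not an integer, `ε₁` and `φ₂` are differentiable
at `x` and `ε₁'(x) = (1 - φ₂'(x))²`. -/
theorem eps1_deriv (x : ℝ) (hx : 0 < x) (hxi : ∀ n : ℤ, x ≠ n) :
    DifferentiableAt ℝ eps1 x ∧ DifferentiableAt ℝ phi2 x ∧
      deriv eps1 x = (1 - deriv phi2 x) ^ 2 := by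
  have hx0 : x ≠ 0 := hx.ne'
  have hf : HasDerivAt (fun y : ℝ => Int.fract y) 1 x := by
    have h1 : HasDerivAt (fun y : ℝ => y - (⌊x⌋ : ℝ)) 1 x := (hasDerivAt_id x).sub_const _
    refine h1.congr_of_eventuallyEq ?_
    have hlt : (⌊x⌋ : ℝ) < x := lt_of_le_of_ne (Int.floor_le x) (fun h => hxi _ h.symm)
    filter_upwards [Ioo_mem_nhds hlt (Int.lt_floor_add_one x)] with y hy
    have : ⌊y⌋ = ⌊x⌋ := Int.floor_eq_iff.mpr ⟨hy.1.le, hy.2⟩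
    rw [← this]
    exact (Int.self_sub_floor y).symm
  have hid := hasDerivAt_id' x
  have hp := (hid.sub_const 1).sub (((hf.pow 2).sub hf).div hid hx0)
  have he := (((hasDerivAt_const x (1 / 3 : ℝ)).sub
      ((hasDerivAt_const x (1 : ℝ)).div (hid.const_mul 3) (by positivity))).add
      (((((hf.pow 3).sub ((hf.pow 2).const_mul (3 / 2))).add (hf.const_mul (1 / 2))).const_mul
        (4 / 3)).div (hid.pow 2) (by simpa using hx0))).sub
      (((((hf.pow 4).sub ((hf.pow 3).const_mul 2)).add (hf.pow 2)).const_mul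
        (1 / 3)).div (hid.pow 3) (by simpa using hx0))
  have hp' : HasDerivAt phi2 _ x := hp
  have he' : HasDerivAt eps1 _ x := he
  refine ⟨he'.differentiableAt, hp'.differentiableAt, ?_⟩
  rw [he'.deriv, hp'.deriv]
  simp only [Pi.pow_apply, Pi.sub_apply, Pi.add_apply, Pi.mul_apply]
  generalize Int.fract x = f
  push_cast
  field_simp
  ring
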